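/- Let D be a *-SH domain and let x be a nonzero nonunit of D. Then xD is expressible, uniquely up to order, as a *-product of mutually *-comaximal *-homogeneous ideals, each of which is *-invertible. Moreover, if M is a maximal *-ideal of D containing x, then xD_M ∩ D (the contraction to D of the extension of xD to the localization D_M) is a *-invertible *-homogeneous ideal. -/

import Mathlib

open scoped nonZeroDivisors

/-- A star operation on the nonzero fractional ideals of an integral domain `D`
with quotient field `K`: it fixes nonzero principal fractional ideals, commutes with
multiplication by nonzero principal fractional ideals, is extensive, monotone and
idempotent (on nonzero fractional ideals). -/
structure StarOperation (D K : Type*) [CommRing D] [IsDomain D] [Field K]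
    [Algebra D K] [IsFractionRing D K] where
  star : FractionalIdeal D⁰ K → FractionalIdeal D⁰ K
  star_spanSingleton : ∀ x : K, x ≠ 0 →
    star (FractionalIdeal.spanSingleton D⁰ x) = FractionalIdeal.spanSingleton D⁰ x
  star_smul : ∀ (x : K) (I : FractionalIdeal D⁰ K), x ≠ 0 → I ≠ 0 →
    star (FractionalIdeal.spanSingleton D⁰ x * I) = FractionalIdeal.spanSingleton D⁰ x * star I
  le_star : ∀ I : FractionalIdeal D⁰ K, I ≠ 0 → I ≤ star I
  star_mono : ∀ I J : FractionalIdeal D⁰ K, I ≠ 0 → J ≠ 0 → I ≤ J → star I ≤ star J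
  star_idem : ∀ I : FractionalIdeal D⁰ K, I ≠ 0 → star (star I) = star I

namespace StarOperation

variable {D K : Type*} [CommRing D] [IsDomain D] [Field K] [Algebra D K] [IsFractionRing D K]
variable (s : StarOperation D K)

/-- `*` has finite character: for every nonzero fractional ideal `I`, `I^*` is the union
of `J^*` over the nonzero finitely generated fractional subideals `J` of `I`. -/
def FiniteCharacter : Prop :=
  ∀ I : FractionalIdeal D⁰ K, I ≠ 0 → ∀ x ∈ s.star I,
    ∃ J : FractionalIdeal D⁰ K, J ≠ 0 ∧ (J : Submodule D K).FG ∧ J ≤ I ∧ x ∈ s.star J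

/-- A (nonzero) integral ideal `I` of `D` is a `*`-ideal if `I^* = I`. -/
def IsStarIdeal (I : Ideal D) : Prop :=
  I ≠ ⊥ ∧ s.star (I : FractionalIdeal D⁰ K) = (I : FractionalIdeal D⁰ K)

/-- An integral ideal `I` of `D` is a `*`-ideal of finite type if `I = J^*` for some
nonzero finitely generated ideal `J`. -/
def IsFiniteTypeStarIdeal (I : Ideal D) : Prop :=
  ∃ J : Ideal D, J ≠ ⊥ ∧ J.FG ∧
    s.star (J : FractionalIdeal D⁰ K) = (I : FractionalIdeal D⁰ K)

/-- A maximal `*`-ideal: maximal among proper integral `*`-ideals. -/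
def IsMaxStarIdeal (M : Ideal D) : Prop :=
  M ≠ ⊤ ∧ s.IsStarIdeal M ∧ ∀ J : Ideal D, J ≠ ⊤ → s.IsStarIdeal J → M ≤ J → J = M

/-- `I` is `*`-homogeneous: a proper `*`-ideal of finite type such that `(J + J')^* ≠ D`
for every pair `J`, `J'` of proper `*`-ideals of finite type containing `I`. -/
def IsHomog (I : Ideal D) : Prop :=
  I ≠ ⊤ ∧ s.IsStarIdeal I ∧ s.IsFiniteTypeStarIdeal I ∧
    ∀ J J' : Ideal D, J ≠ ⊤ → J' ≠ ⊤ → s.IsStarIdeal J → s.IsStarIdeal J' →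
      s.IsFiniteTypeStarIdeal J → s.IsFiniteTypeStarIdeal J' → I ≤ J → I ≤ J' →
      s.star ((J + J' : Ideal D) : FractionalIdeal D⁰ K) ≠ 1

/-- The set `M(I) = {x ∈ D : (xD + I)^* ≠ D}` attached to an ideal `I`. -/
def MSet (I : Ideal D) : Set D :=
  {x : D | s.star ((Ideal.span {x} + I : Ideal D) : FractionalIdeal D⁰ K) ≠ 1}

/-- `A` and `B` are `*`-comaximal if `(A + B)^* = D`. -/
def StarComaximal (A B : Ideal D) : Prop :=
  s.star ((A + B : Ideal D) : FractionalIdeal D⁰ K) = 1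

/-- An integral ideal `I` is `*`-invertible if `(I · I⁻¹)^* = D`. -/
def StarInvertible (I : Ideal D) : Prop :=
  s.star ((I : FractionalIdeal D⁰ K) * (I : FractionalIdeal D⁰ K)⁻¹) = 1

/-- `D` is a `*`-SH domain: every principal ideal generated by a nonzero nonunit is a
`*`-product of finitely many `*`-homogeneous ideals. -/
def IsSHDomain : Prop :=
  ∀ x : D, x ≠ 0 → ¬IsUnit x →
    ∃ T : Multiset (Ideal D), (∀ J ∈ T, s.IsHomog J) ∧
      s.star ((T.prod : Ideal D) : FractionalIdeal D⁰ K) =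
        ((Ideal.span {x} : Ideal D) : FractionalIdeal D⁰ K)

/-- `D` has finite `*`-character: every nonzero nonunit lies in only finitely many
maximal `*`-ideals. -/
def FiniteStarCharacter : Prop :=
  ∀ x : D, x ≠ 0 → ¬IsUnit x → {P : Ideal D | s.IsMaxStarIdeal P ∧ x ∈ P}.Finite

end StarOperation

namespace StarOperation

section Aux

variable {D K : Type*} [CommRing D] [IsDomain D] [Field K] [Algebra D K] [IsFractionRing D K]
variable (s : StarOperation D K)

open scoped Classical in
/-- The star operation transported to integral ideals. -/
noncomputable def cl (I : Ideal D) : Ideal D :=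
  if I = ⊥ then ⊥ else
    Submodule.comap (Algebra.linearMap D K)
      (s.star (I : FractionalIdeal D⁰ K) : Submodule D K)

theorem cl_bot : s.cl (⊥ : Ideal D) = ⊥ := by simp [cl]

theorem mem_cl {I : Ideal D} (h : I ≠ ⊥) (y : D) :
    y ∈ s.cl I ↔ algebraMap D K y ∈ s.star (I : FractionalIdeal D⁰ K) := by
  simp [cl, h]

theorem coe_ne {I : Ideal D} (h : I ≠ ⊥) : (I : FractionalIdeal D⁰ K) ≠ 0 :=
  FractionalIdeal.coeIdeal_ne_zero.mpr h

theorem star_one : s.star 1 = 1 := by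
  have := s.star_spanSingleton 1 one_ne_zero
  simpa using this

theorem star_le_one {I : FractionalIdeal D⁰ K} (h : I ≠ 0) (h1 : I ≤ 1) : s.star I ≤ 1 := by
  have := s.star_mono I 1 h one_ne_zero h1
  rwa [s.star_one] at this

theorem coe_cl {I : Ideal D} (h : I ≠ ⊥) :
    ((s.cl I : Ideal D) : FractionalIdeal D⁰ K) = s.star (I : FractionalIdeal D⁰ K) := by
  have h1 := s.star_le_one (coe_ne (K := K) h) FractionalIdeal.coeIdeal_le_one
  obtain ⟨A, hA⟩ := FractionalIdeal.le_one_iff_exists_coeIdeal.mp h1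
  rw [← hA]
  congr 1
  ext y
  rw [s.mem_cl h, ← hA, FractionalIdeal.mem_coeIdeal]
  constructor
  · rintro ⟨z, hz, hzy⟩
    rwa [← IsFractionRing.injective D K hzy]
  · intro hy
    exact ⟨y, hy, rfl⟩

theorem coe_inj {I J : Ideal D} :
    (I : FractionalIdeal D⁰ K) = (J : FractionalIdeal D⁰ K) ↔ I = J :=
  FractionalIdeal.coeIdeal_inj

theorem star_eq_coe {I J : Ideal D} (h : I ≠ ⊥) :
    s.star (I : FractionalIdeal D⁰ K) = (J : FractionalIdeal D⁰ K) ↔ s.cl I = J := by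
  rw [← s.coe_cl h, coe_inj]

theorem star_eq_one {I : Ideal D} (h : I ≠ ⊥) :
    s.star (I : FractionalIdeal D⁰ K) = 1 ↔ s.cl I = ⊤ := by
  rw [← s.star_eq_coe h, FractionalIdeal.coeIdeal_top]

theorem le_cl (I : Ideal D) : I ≤ s.cl I := by
  by_cases h : I = ⊥
  · simp [h]
  · rw [← FractionalIdeal.coeIdeal_le_coeIdeal K, s.coe_cl h]
    exact s.le_star _ (coe_ne h)

theorem cl_ne {I : Ideal D} (h : I ≠ ⊥) : s.cl I ≠ ⊥ := fun h' => h (by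
  have := s.le_cl I
  rw [h'] at this
  exact le_bot_iff.mp this)

theorem cl_mono {I J : Ideal D} (h : I ≤ J) : s.cl I ≤ s.cl J := by
  by_cases hI : I = ⊥
  · simp [hI, cl_bot]
  · have hJ : J ≠ ⊥ := fun h' => hI (by rw [h'] at h; exact le_bot_iff.mp h)
    rw [← FractionalIdeal.coeIdeal_le_coeIdeal K, s.coe_cl hI, s.coe_cl hJ]
    exact s.star_mono _ _ (coe_ne hI) (coe_ne hJ) ((FractionalIdeal.coeIdeal_le_coeIdeal K).mpr h)

theorem cl_idem (I : Ideal D) : s.cl (s.cl I) = s.cl I := by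
  by_cases h : I = ⊥
  · simp [h, cl_bot]
  · rw [← coe_inj (K := K), s.coe_cl (s.cl_ne h), s.coe_cl h, s.star_idem _ (coe_ne h)]

theorem cl_le {I J : Ideal D} (h : I ≤ s.cl J) : s.cl I ≤ s.cl J := by
  have := s.cl_mono h
  rwa [s.cl_idem] at this

theorem mul_mem_cl {I : Ideal D} {x : D} (y : D) (h : x ∈ s.cl I) :
    y * x ∈ s.cl (Ideal.span {y} * I) := by
  by_cases hI : I = ⊥
  · subst hI
    rw [cl_bot] at h
    simp [(Ideal.mem_bot).mp h]
  by_cases hy : y = 0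
  · simp [hy]
  have hne : Ideal.span {y} * I ≠ ⊥ := by
    simp [Ideal.mul_eq_bot, hy, hI]
  rw [s.mem_cl hne, FractionalIdeal.coeIdeal_mul, FractionalIdeal.coeIdeal_span_singleton,
    s.star_smul _ _ (by simpa using hy) (coe_ne hI), map_mul]
  exact FractionalIdeal.mul_mem_mul (FractionalIdeal.mem_spanSingleton_self _ _)
    ((s.mem_cl hI x).mp h)

theorem cl_mul_le (I J : Ideal D) : s.cl I * J ≤ s.cl (I * J) := by
  rw [Ideal.mul_le]
  intro a ha b hb
  rw [mul_comm a b]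
  refine s.cl_mono ?_ (s.mul_mem_cl b ha)
  rw [mul_comm (Ideal.span {b}) I]
  exact Ideal.mul_mono_right ((Ideal.span_singleton_le_iff_mem _).mpr hb)

theorem cl_mul (I J : Ideal D) : s.cl (s.cl I * J) = s.cl (I * J) :=
  le_antisymm (s.cl_le (s.cl_mul_le I J)) (s.cl_mono (Ideal.mul_mono_left (s.le_cl I)))

theorem cl_span {x : D} : s.cl (Ideal.span {x}) = Ideal.span {x} := by
  by_cases h : x = 0
  · simp [h, cl_bot]
  · rw [← s.star_eq_coe (by simpa using h), FractionalIdeal.coeIdeal_span_singleton,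
      s.star_spanSingleton _ (by simpa using h)]

variable {s} in
theorem FiniteCharacter.cl (hs : s.FiniteCharacter) {I : Ideal D} {x : D} (h : x ∈ s.cl I) :
    ∃ J : Ideal D, J.FG ∧ J ≤ I ∧ x ∈ s.cl J := by
  by_cases hI : I = ⊥
  · exact ⟨⊥, Submodule.fg_bot, bot_le, by rwa [hI] at h⟩
  obtain ⟨J, hJ0, hJf, hJI, hx⟩ := hs _ (coe_ne hI) _ ((s.mem_cl hI x).mp h)
  obtain ⟨A, rfl⟩ := FractionalIdeal.le_one_iff_exists_coeIdeal.mp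
    (hJI.trans FractionalIdeal.coeIdeal_le_one)
  have hA : A ≠ ⊥ := FractionalIdeal.coeIdeal_ne_zero.mp hJ0
  refine ⟨A, ?_, (FractionalIdeal.coeIdeal_le_coeIdeal K).mp hJI, (s.mem_cl hA x).mpr hx⟩
  exact (FractionalIdeal.coeIdeal_fg D⁰ (IsFractionRing.injective D K) A).mp hJf

theorem isStarIdeal_iff {I : Ideal D} : s.IsStarIdeal I ↔ I ≠ ⊥ ∧ s.cl I = I :=
  and_congr_right fun h => s.star_eq_coe h

theorem isFT_iff {I : Ideal D} :
    s.IsFiniteTypeStarIdeal I ↔ ∃ J : Ideal D, J ≠ ⊥ ∧ J.FG ∧ s.cl J = I :=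
  exists_congr fun _ => and_congr_right fun h => and_congr_right fun _ => s.star_eq_coe h

theorem sup_ne {A B : Ideal D} (h : A ≠ ⊥) : A + B ≠ ⊥ := fun h' =>
  h (le_bot_iff.mp (h' ▸ (le_sup_left : A ≤ A ⊔ B)))

theorem comax_iff {A B : Ideal D} (h : A ≠ ⊥) : s.StarComaximal A B ↔ s.cl (A + B) = ⊤ :=
  s.star_eq_one (sup_ne h)

theorem comax_symm : Std.Symm s.StarComaximal := ⟨fun A B h => by
  unfold StarComaximal at *
  rwa [add_comm]⟩

variable {s}

theorem exists_max (hs : s.FiniteCharacter) {I : Ideal D} (h0 : I ≠ ⊥) (h : s.cl I ≠ ⊤) :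
    ∃ M, s.IsMaxStarIdeal M ∧ I ≤ M := by
  obtain ⟨M, hIM, hM⟩ := zorn_le_nonempty₀ {J : Ideal D | s.cl J = J ∧ J ≠ ⊤} (by
    intro c hc hch y hy
    refine ⟨sSup c, ⟨?_, ?_⟩, fun z hz => le_sSup hz⟩
    · refine le_antisymm (fun x hx => ?_) (s.le_cl _)
      obtain ⟨J, hJ, hJc, hxJ⟩ := hs.cl hx
      obtain ⟨L, hL, hJL⟩ := (CompleteLattice.isCompactElement_iff_le_of_directed_sSup_le _ _).mp
        ((Submodule.fg_iff_compact J).mp hJ) c ⟨y, hy⟩ hch.directedOn hJc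
      have := s.cl_mono hJL hxJ
      rw [(hc hL).1] at this
      exact le_sSup hL this
    · rw [Ne, Ideal.eq_top_iff_one]
      intro h1
      obtain ⟨L, hL, hJL⟩ := (Submodule.mem_sSup_of_directed ⟨y, hy⟩ hch.directedOn).mp h1
      exact (hc hL).2 ((Ideal.eq_top_iff_one _).mpr hJL)) (s.cl I) ⟨s.cl_idem I, h⟩
  have hIM' := (s.le_cl I).trans hIM
  have hM0 : M ≠ ⊥ := fun h' => h0 (le_bot_iff.mp (h' ▸ hIM'))
  refine ⟨M, ⟨hM.prop.2, s.isStarIdeal_iff.mpr ⟨hM0, hM.prop.1⟩, fun J hJ hJs hMJ => ?_⟩, hIM'⟩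
  exact (hM.eq_of_le ⟨(s.isStarIdeal_iff.mp hJs).2, hJ⟩ hMJ).symm

theorem IsMaxStarIdeal.ne_bot {M : Ideal D} (hM : s.IsMaxStarIdeal M) : M ≠ ⊥ :=
  (s.isStarIdeal_iff.mp hM.2.1).1

theorem IsMaxStarIdeal.cl_eq {M : Ideal D} (hM : s.IsMaxStarIdeal M) : s.cl M = M :=
  (s.isStarIdeal_iff.mp hM.2.1).2

theorem IsMaxStarIdeal.cl_top {M J : Ideal D} (hM : s.IsMaxStarIdeal M) (h : M ≤ J)
    (hJ : ¬ J ≤ M) : s.cl J = ⊤ := by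
  by_contra hne
  have h0 : J ≠ ⊥ := fun h' => hM.ne_bot (le_bot_iff.mp (h' ▸ h))
  have := hM.2.2 (s.cl J) hne (s.isStarIdeal_iff.mpr ⟨s.cl_ne h0, s.cl_idem J⟩)
    (h.trans (s.le_cl J))
  exact hJ (this ▸ s.le_cl J)

/-- If `(t, I)^* = D` and `t * y ∈ I = I^*`, then `y ∈ I`. -/
theorem mem_of_comax {I : Ideal D} (hI : s.cl I = I) {t y : D}
    (h : s.cl (Ideal.span {t} + I) = ⊤) (hty : t * y ∈ I) : y ∈ I := by
  have h1 : (1 : D) ∈ s.cl (Ideal.span {t} + I) := by rw [h]; trivial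
  have h2 := s.mul_mem_cl y h1
  rw [mul_one] at h2
  rw [← hI]
  refine s.cl_mono ?_ h2
  rw [mul_add, Ideal.span_singleton_mul_span_singleton]
  refine sup_le ?_ Ideal.mul_le_right
  rw [Ideal.span_singleton_le_iff_mem, mul_comm]
  exact hty

theorem IsMaxStarIdeal.isPrime {M : Ideal D} (hM : s.IsMaxStarIdeal M) : M.IsPrime := by
  refine ⟨hM.1, fun {a b} hab => ?_⟩
  by_cases ha : a ∈ M
  · exact Or.inl ha
  · refine Or.inr (mem_of_comax hM.cl_eq (hM.cl_top le_sup_right fun h => ha ?_) hab)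
    exact h (Ideal.mem_sup_left (Ideal.mem_span_singleton_self a))

theorem IsHomog.ne_bot {I : Ideal D} (h : s.IsHomog I) : I ≠ ⊥ := (s.isStarIdeal_iff.mp h.2.1).1

theorem IsHomog.cl_eq {I : Ideal D} (h : s.IsHomog I) : s.cl I = I :=
  (s.isStarIdeal_iff.mp h.2.1).2

theorem fg_le_sup {F M N : Ideal D} (hF : F.FG) (h : F ≤ M + N) :
    ∃ A B : Ideal D, A.FG ∧ B.FG ∧ A ≤ M ∧ B ≤ N ∧ F ≤ A + B := by
  refine Submodule.fg_induction (R := D) (M := D)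
    (motive := fun F _ => F ≤ M + N → ∃ A B : Ideal D, A.FG ∧ B.FG ∧ A ≤ M ∧ B ≤ N ∧ F ≤ A + B)
    ?_ ?_ F hF h
  · intro x hx
    obtain ⟨a, ha, b, hb, hab⟩ := Submodule.mem_sup.mp (hx (Submodule.mem_span_singleton_self x))
    refine ⟨Ideal.span {a}, Ideal.span {b}, Submodule.fg_span_singleton a,
      Submodule.fg_span_singleton b, (Ideal.span_singleton_le_iff_mem _).mpr ha,
      (Ideal.span_singleton_le_iff_mem _).mpr hb, ?_⟩
    rw [Submodule.span_singleton_le_iff_mem, ← hab]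
    exact Submodule.add_mem_sup (Ideal.mem_span_singleton_self a) (Ideal.mem_span_singleton_self b)
  · intro F G _ _ hF hG h
    obtain ⟨A, B, h1, h2, h3, h4, h5⟩ := hF (le_sup_left.trans h)
    obtain ⟨A', B', h1', h2', h3', h4', h5'⟩ := hG (le_sup_right.trans h)
    refine ⟨A ⊔ A', B ⊔ B', Submodule.FG.sup h1 h1', Submodule.FG.sup h2 h2', sup_le h3 h3', sup_le h4 h4', ?_⟩
    exact sup_le (h5.trans (sup_le_sup le_sup_left le_sup_left))
      (h5'.trans (sup_le_sup le_sup_right le_sup_right))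

theorem IsHomog.unique (hs : s.FiniteCharacter) {I : Ideal D} (h : s.IsHomog I) {M N : Ideal D}
    (hM : s.IsMaxStarIdeal M) (hN : s.IsMaxStarIdeal N) (hIM : I ≤ M) (hIN : I ≤ N) : M = N := by
  by_contra hne
  have htop : s.cl (M + N) = ⊤ := hM.cl_top le_sup_left fun hle =>
    hne (hN.2.2 M hM.1 hM.2.1 (le_sup_right.trans hle))
  have h1 : (1 : D) ∈ s.cl (M + N) := by rw [htop]; trivial
  obtain ⟨F, hF, hFle, h1F⟩ := hs.cl h1
  obtain ⟨A, B, hA, hB, hAM, hBN, hFAB⟩ := fg_le_sup hF hFle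
  obtain ⟨I₀, hI₀, hI₀f, hI₀c⟩ := s.isFT_iff.mp h.2.2.1
  have hI₀I : I₀ ≤ I := hI₀c ▸ s.le_cl I₀
  have key : ∀ A M : Ideal D, A.FG → A ≤ M → I ≤ M → s.IsMaxStarIdeal M →
      s.cl (I₀ + A) ≠ ⊤ ∧ s.IsStarIdeal (s.cl (I₀ + A)) ∧
      s.IsFiniteTypeStarIdeal (s.cl (I₀ + A)) ∧ I ≤ s.cl (I₀ + A) := by
    intro A M hA hAM hIM hM
    refine ⟨fun ht => hM.1 ?_, s.isStarIdeal_iff.mpr ⟨s.cl_ne (sup_ne hI₀), s.cl_idem _⟩,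
      s.isFT_iff.mpr ⟨_, sup_ne hI₀, Submodule.FG.sup hI₀f hA, rfl⟩, ?_⟩
    · rw [eq_top_iff, ← ht, ← hM.cl_eq]
      exact s.cl_mono (sup_le (hI₀I.trans hIM) hAM)
    · conv_lhs => rw [← hI₀c]
      exact s.cl_mono le_sup_left
  obtain ⟨a1, a2, a3, a4⟩ := key A M hA hAM hIM hM
  obtain ⟨b1, b2, b3, b4⟩ := key B N hB hBN hIN hN
  refine h.2.2.2 _ _ a1 b1 a2 b2 a3 b3 a4 b4 ?_
  rw [s.star_eq_one (sup_ne (s.cl_ne (sup_ne hI₀))), Ideal.eq_top_iff_one]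
  refine s.cl_mono (hFAB.trans ?_) h1F
  exact sup_le_sup (le_sup_right.trans (s.le_cl _)) (le_sup_right.trans (s.le_cl _))

theorem IsHomog.exists_max (hs : s.FiniteCharacter) {I : Ideal D} (h : s.IsHomog I) :
    ∃ M, s.IsMaxStarIdeal M ∧ I ≤ M :=
  StarOperation.exists_max hs h.ne_bot (by rw [h.cl_eq]; exact h.1)

theorem isHomog_of (hs : s.FiniteCharacter) {I M : Ideal D} (hM : s.IsMaxStarIdeal M)
    (hIM : I ≤ M) (hft : s.IsFiniteTypeStarIdeal I)
    (hu : ∀ N, s.IsMaxStarIdeal N → I ≤ N → N = M) : s.IsHomog I := by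
  obtain ⟨I₀, h0, h1, h2⟩ := s.isFT_iff.mp hft
  have hne : I ≠ ⊥ := h2 ▸ s.cl_ne h0
  refine ⟨fun h => hM.1 (top_le_iff.mp (h ▸ hIM)), s.isStarIdeal_iff.mpr ⟨hne, ?_⟩, hft, ?_⟩
  · rw [← h2, s.cl_idem]
  · intro J J' hJ hJ' sJ sJ' _ _ hIJ hIJ'
    rw [s.isStarIdeal_iff] at sJ sJ'
    have key : ∀ J : Ideal D, J ≠ ⊤ → J ≠ ⊥ → s.cl J = J → I ≤ J → J ≤ M := by
      intro J hJ hJ0 hJc hIJ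
      obtain ⟨N, hN, hJN⟩ := StarOperation.exists_max hs hJ0 (by rwa [hJc])
      exact hu N hN (hIJ.trans hJN) ▸ hJN
    rw [Ne, s.star_eq_one (sup_ne sJ.1)]
    intro ht
    apply hM.1
    rw [eq_top_iff, ← ht, ← hM.cl_eq]
    refine s.cl_mono ?_
    exact sup_le (key J hJ sJ.1 sJ.2 hIJ) (key J' hJ' sJ'.1 sJ'.2 hIJ')

/-- Non-comaximal homogeneous ideals have a homogeneous star product. -/
theorem IsHomog.mul (hs : s.FiniteCharacter) {I J : Ideal D} (hI : s.IsHomog I) (hJ : s.IsHomog J)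
    (h : ¬ s.StarComaximal I J) : s.IsHomog (s.cl (I * J)) := by
  rw [s.comax_iff hI.ne_bot] at h
  obtain ⟨M, hM, hle⟩ := StarOperation.exists_max hs (sup_ne hI.ne_bot) h
  have hIM : I ≤ M := le_sup_left.trans hle
  have hJM : J ≤ M := le_sup_right.trans hle
  obtain ⟨I₀, hI0, hI1, hI2⟩ := s.isFT_iff.mp hI.2.2.1
  obtain ⟨J₀, hJ0, hJ1, hJ2⟩ := s.isFT_iff.mp hJ.2.2.1
  refine isHomog_of hs hM ?_ (s.isFT_iff.mpr ⟨I₀ * J₀, ?_, hI1.mul hJ1, ?_⟩) ?_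
  · rw [← hM.cl_eq]
    refine s.cl_mono ?_
    exact Ideal.mul_le_left.trans hIM
  · simp [Ideal.mul_eq_bot, hI0, hJ0]
  · rw [← s.cl_mul, hI2, mul_comm, ← s.cl_mul, hJ2, mul_comm]
  · intro N hN hle
    have := hN.isPrime
    rcases (this.mul_le).mp ((s.le_cl _).trans hle) with h | h
    · exact hI.unique hs hN hM h hIM
    · exact hJ.unique hs hN hM h hJM

theorem not_comax {I J M : Ideal D} (hI : I ≠ ⊥) (hM : s.IsMaxStarIdeal M) (hIM : I ≤ M)
    (hJM : J ≤ M) : ¬ s.StarComaximal I J := by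
  rw [s.comax_iff hI]
  intro h
  apply hM.1
  rw [eq_top_iff, ← h, ← hM.cl_eq]
  refine s.cl_mono ?_
  exact sup_le hIM hJM

theorem invertible_of {I R : Ideal D} {x : D} (hx : x ≠ 0)
    (h : s.cl (I * R) = Ideal.span {x}) : s.StarInvertible I := by
  have hne : I * R ≠ ⊥ := fun h' => by
    rw [h', cl_bot] at h
    exact hx (by simpa using h.symm)
  have hI : I ≠ ⊥ := fun h' => hne (by simp [h'])
  have hxK : algebraMap D K x ≠ 0 := by simpa using hx
  have hle : (I : FractionalIdeal D⁰ K) * (R : FractionalIdeal D⁰ K) ≤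
      FractionalIdeal.spanSingleton D⁰ (algebraMap D K x) := by
    rw [← FractionalIdeal.coeIdeal_mul, ← FractionalIdeal.coeIdeal_span_singleton,
      FractionalIdeal.coeIdeal_le_coeIdeal, ← h]
    exact s.le_cl _
  have hst := (s.star_eq_coe hne).mpr h
  rw [FractionalIdeal.coeIdeal_mul, FractionalIdeal.coeIdeal_span_singleton] at hst
  have hne' : (I : FractionalIdeal D⁰ K) * (R : FractionalIdeal D⁰ K) ≠ 0 := by
    rw [← FractionalIdeal.coeIdeal_mul]; exact coe_ne hne
  have hcancel : FractionalIdeal.spanSingleton D⁰ (algebraMap D K x)⁻¹ *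
      FractionalIdeal.spanSingleton D⁰ (algebraMap D K x) = 1 := by
    rw [FractionalIdeal.spanSingleton_mul_spanSingleton, inv_mul_cancel₀ hxK,
      FractionalIdeal.spanSingleton_one]
  have h1 : s.star (FractionalIdeal.spanSingleton D⁰ (algebraMap D K x)⁻¹ *
      ((I : FractionalIdeal D⁰ K) * (R : FractionalIdeal D⁰ K))) = 1 := by
    rw [s.star_smul _ _ (inv_ne_zero hxK) hne', hst, hcancel]
  have hinv : FractionalIdeal.spanSingleton D⁰ (algebraMap D K x)⁻¹ *
      (R : FractionalIdeal D⁰ K) ≤ (I : FractionalIdeal D⁰ K)⁻¹ := by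
    rw [FractionalIdeal.inv_eq, FractionalIdeal.le_div_iff_mul_le (coe_ne hI), mul_assoc,
      mul_comm (R : FractionalIdeal D⁰ K), ← hcancel]
    exact mul_le_mul_right hle _
  have hle2 : FractionalIdeal.spanSingleton D⁰ (algebraMap D K x)⁻¹ *
      ((I : FractionalIdeal D⁰ K) * (R : FractionalIdeal D⁰ K)) ≤
      (I : FractionalIdeal D⁰ K) * (I : FractionalIdeal D⁰ K)⁻¹ := by
    rw [mul_left_comm]
    exact mul_le_mul_right hinv _
  have hne2 : FractionalIdeal.spanSingleton D⁰ (algebraMap D K x)⁻¹ *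
      ((I : FractionalIdeal D⁰ K) * (R : FractionalIdeal D⁰ K)) ≠ 0 :=
    fun h' => by
      rw [h'] at hle2 h1
      have h2 := congrArg (fun z => FractionalIdeal.spanSingleton D⁰ (algebraMap D K x) * z) h'
      simp only [← mul_assoc, mul_zero] at h2
      rw [mul_comm (FractionalIdeal.spanSingleton D⁰ (algebraMap D K x)), hcancel, one_mul] at h2
      exact hne' h2
  have hne3 : (I : FractionalIdeal D⁰ K) * (I : FractionalIdeal D⁰ K)⁻¹ ≠ 0 := fun h' =>
    hne2 (le_antisymm (h' ▸ hle2) (FractionalIdeal.zero_le _))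
  refine le_antisymm (s.star_le_one hne3 ?_) (h1 ▸ s.star_mono _ _ hne2 hne3 hle2)
  rw [FractionalIdeal.inv_eq]
  exact FractionalIdeal.mul_one_div_le_one

theorem contraction_eq (hs : s.FiniteCharacter) {I R M : Ideal D} [M.IsPrime] {x : D}
    (hI : s.IsHomog I) (hM : s.IsMaxStarIdeal M) (hIM : I ≤ M) (hR : ¬ R ≤ M)
    (h : s.cl (I * R) = Ideal.span {x}) :
    Ideal.comap (algebraMap D (Localization.AtPrime M))
        (Ideal.map (algebraMap D (Localization.AtPrime M)) (Ideal.span {x})) = I := by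
  ext y
  rw [Ideal.mem_comap, IsLocalization.algebraMap_mem_map_algebraMap_iff M.primeCompl]
  constructor
  · rintro ⟨t, ht, hty⟩
    refine mem_of_comax hI.cl_eq ?_ (?_ : t * y ∈ I)
    · by_contra hne
      obtain ⟨N, hN, hle⟩ := StarOperation.exists_max hs (I := Ideal.span {t} + I)
        (by rw [add_comm]; exact sup_ne hI.ne_bot) hne
      have hNM := hI.unique hs hN hM (le_sup_right.trans hle) hIM
      subst hNM
      have h3 : Ideal.span {t} ≤ N := le_sup_left.trans hle
      exact ht (h3 (Ideal.mem_span_singleton_self t))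
    · rw [← h] at hty
      rw [← hI.cl_eq]
      exact s.cl_mono Ideal.mul_le_left hty
  · intro hy
    obtain ⟨t, htR, htM⟩ := SetLike.not_le_iff_exists.mp hR
    refine ⟨t, htM, ?_⟩
    rw [← h, mul_comm t y]
    exact s.le_cl _ (Ideal.mul_mem_mul hy htR)

theorem prod_ne_bot {T : Multiset (Ideal D)} (hT : ∀ J ∈ T, s.IsHomog J) : T.prod ≠ ⊥ := by
  intro h
  rw [← Ideal.zero_eq_bot, Multiset.prod_eq_zero_iff] at h
  exact (hT _ h).ne_bot rfl

theorem pairwise_cons {T : Multiset (Ideal D)} {J : Ideal D}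
    (h : (J ::ₘ T).Pairwise s.StarComaximal) : ∀ I ∈ T, s.StarComaximal J I := by
  have := s.comax_symm
  induction T using Quotient.inductionOn with
  | h l =>
    have h' : Multiset.Pairwise s.StarComaximal ((J :: l : List (Ideal D)) : Multiset (Ideal D)) := h
    rw [Multiset.pairwise_coe_iff_pairwise] at h'
    intro I hI
    exact (List.pairwise_cons.mp h').1 I hI

theorem pairwise_of {T : Multiset (Ideal D)}
    (h : ∀ I J T', T = I ::ₘ J ::ₘ T' → s.StarComaximal I J) : T.Pairwise s.StarComaximal := by
  induction T using Quotient.inductionOn with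
  | h l =>
    refine ⟨l, rfl, List.pairwise_iff_forall_sublist.mpr fun {a b} hab => ?_⟩
    have hle : (([a, b] : List (Ideal D)) : Multiset (Ideal D)) ≤ (l : Multiset (Ideal D)) :=
      Multiset.coe_le.mpr hab.subperm
    obtain ⟨T', hT'⟩ := Multiset.le_iff_exists_add.mp hle
    refine h a b T' ?_
    change (l : Multiset (Ideal D)) = _
    rw [hT', ← Multiset.cons_coe, ← Multiset.cons_coe, Multiset.coe_nil, Multiset.cons_add,
      Multiset.cons_add, zero_add]

theorem exists_pairwise (hs : s.FiniteCharacter) {L : Ideal D} (n : ℕ) :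
    ∀ T : Multiset (Ideal D), T.card = n → (∀ J ∈ T, s.IsHomog J) → s.cl T.prod = L →
    ∃ T : Multiset (Ideal D), (∀ J ∈ T, s.IsHomog J) ∧ T.Pairwise s.StarComaximal ∧
      s.cl T.prod = L := by
  induction n with
  | zero =>
    intro T hT h1 h2
    rw [Multiset.card_eq_zero] at hT
    subst hT
    exact ⟨0, h1, ⟨[], rfl, List.Pairwise.nil⟩, h2⟩
  | succ n ih =>
    intro T hT h1 h2
    by_cases hp : T.Pairwise s.StarComaximal
    · exact ⟨T, h1, hp, h2⟩
    · have : ¬ ∀ I J T', T = I ::ₘ J ::ₘ T' → s.StarComaximal I J := fun h => hp (pairwise_of h)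
      push Not at this
      obtain ⟨I, J, T', rfl, hIJ⟩ := this
      refine ih (s.cl (I * J) ::ₘ T') ?_ ?_ ?_
      · simpa using hT
      · intro A hA
        rcases Multiset.mem_cons.mp hA with rfl | hA
        · exact (h1 I (by simp)).mul hs (h1 J (by simp)) hIJ
        · exact h1 A (by simp [hA])
      · rw [← h2, Multiset.prod_cons, s.cl_mul, Multiset.prod_cons, Multiset.prod_cons, mul_assoc]

theorem rest_not_le {U : Multiset (Ideal D)} {J M : Ideal D} (hJ : s.IsHomog J)
    (hp : (J ::ₘ U).Pairwise s.StarComaximal)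
    (hM : s.IsMaxStarIdeal M) (hJM : J ≤ M) : ¬ U.prod ≤ M := by
  intro hle
  obtain ⟨I, hI, hIM⟩ := (hM.isPrime.multiset_prod_le).mp hle
  exact not_comax hJ.ne_bot hM hJM hIM (pairwise_cons hp I hI)

/-- The contraction of `xD_M`, without the instance argument. -/
def IsContr (s : StarOperation D K) (x : D) (J : Ideal D) : Prop :=
  ∃ (M : Ideal D) (_ : M.IsPrime), s.IsMaxStarIdeal M ∧ x ∈ M ∧
    Ideal.comap (algebraMap D (Localization.AtPrime M))
        (Ideal.map (algebraMap D (Localization.AtPrime M)) (Ideal.span {x})) = J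

theorem exists_factor (hs : s.FiniteCharacter) {U : Multiset (Ideal D)}
    (hU : ∀ J ∈ U, s.IsHomog J) (hp : U.Pairwise s.StarComaximal) {x : D}
    (hx : s.cl U.prod = Ideal.span {x}) (M : Ideal D) [M.IsPrime] (hM : s.IsMaxStarIdeal M)
    (hxM : x ∈ M) :
    Ideal.comap (algebraMap D (Localization.AtPrime M))
        (Ideal.map (algebraMap D (Localization.AtPrime M)) (Ideal.span {x})) ∈ U := by
  have hle : U.prod ≤ M := by
    refine (s.le_cl _).trans ?_
    rwa [hx, Ideal.span_singleton_le_iff_mem]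
  obtain ⟨J, hJ, hJM⟩ := (hM.isPrime.multiset_prod_le).mp hle
  obtain ⟨U', rfl⟩ := Multiset.exists_cons_of_mem hJ
  rw [Multiset.prod_cons] at hx
  rw [contraction_eq hs (hU J hJ) hM hJM (rest_not_le (hU J hJ) hp hM hJM) hx]
  exact hJ

theorem mem_iff (hs : s.FiniteCharacter) {U : Multiset (Ideal D)}
    (hU : ∀ J ∈ U, s.IsHomog J) (hp : U.Pairwise s.StarComaximal) {x : D}
    (hx : s.cl U.prod = Ideal.span {x}) (J : Ideal D) : J ∈ U ↔ s.IsContr x J := by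
  constructor
  · intro hJ
    obtain ⟨M, hM, hJM⟩ := (hU J hJ).exists_max hs
    have hpr := hM.isPrime
    obtain ⟨U', rfl⟩ := Multiset.exists_cons_of_mem hJ
    rw [Multiset.prod_cons] at hx
    refine ⟨M, hpr, hM, ?_,
      contraction_eq hs (hU J hJ) hM hJM (rest_not_le (hU J hJ) hp hM hJM) hx⟩
    rw [← Ideal.span_singleton_le_iff_mem, ← hx, ← hM.cl_eq]
    refine s.cl_mono ?_
    exact Ideal.mul_le_left.trans hJM
  · rintro ⟨M, hpr, hM, hxM, rfl⟩
    exact exists_factor hs hU hp hx M hM hxM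

theorem nodup_of (hs : s.FiniteCharacter) {U : Multiset (Ideal D)} (hU : ∀ J ∈ U, s.IsHomog J)
    (hp : U.Pairwise s.StarComaximal) : U.Nodup := by
  rw [Multiset.nodup_iff_ne_cons_cons]
  rintro J T rfl
  have hJ := hU J (by simp)
  obtain ⟨M, hM, hJM⟩ := hJ.exists_max hs
  exact not_comax hJ.ne_bot hM hJM hJM (pairwise_cons hp J (by simp))

end Aux

end StarOperation

/-- In a `*`-SH domain, every principal ideal `xD` generated by a nonzero
nonunit is expressible, uniquely up to order, as a `*`-product of mutually `*`-comaximal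
`*`-homogeneous ideals, each `*`-invertible. Moreover, if `M` is a (prime) maximal
`*`-ideal containing `x`, then `xD_M ∩ D` is a `*`-invertible `*`-homogeneous ideal. -/
theorem SH_principal_factorization {D K : Type*} [CommRing D] [IsDomain D] [Field K]
    [Algebra D K] [IsFractionRing D K] (s : StarOperation D K) (hs : s.FiniteCharacter)
    (hSH : s.IsSHDomain) (x : D) (hx0 : x ≠ 0) (hxu : ¬IsUnit x) :
    (∃ T : Multiset (Ideal D), (∀ J ∈ T, s.IsHomog J ∧ s.StarInvertible J) ∧
      T.Pairwise s.StarComaximal ∧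
      s.star ((T.prod : Ideal D) : FractionalIdeal D⁰ K) =
        ((Ideal.span {x} : Ideal D) : FractionalIdeal D⁰ K) ∧
      ∀ U : Multiset (Ideal D), (∀ J ∈ U, s.IsHomog J) → U.Pairwise s.StarComaximal →
        s.star ((U.prod : Ideal D) : FractionalIdeal D⁰ K) =
          ((Ideal.span {x} : Ideal D) : FractionalIdeal D⁰ K) → U = T) ∧
    (∀ (M : Ideal D) [M.IsPrime], s.IsMaxStarIdeal M → x ∈ M →
      s.StarInvertible (Ideal.comap (algebraMap D (Localization.AtPrime M))
        (Ideal.map (algebraMap D (Localization.AtPrime M)) (Ideal.span {x}))) ∧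
      s.IsHomog (Ideal.comap (algebraMap D (Localization.AtPrime M))
        (Ideal.map (algebraMap D (Localization.AtPrime M)) (Ideal.span {x})))) := by
  obtain ⟨T₀, hT₀, hT₀x⟩ := hSH x hx0 hxu
  rw [s.star_eq_coe (StarOperation.prod_ne_bot hT₀)] at hT₀x
  obtain ⟨T, hT, hTp, hTx⟩ := StarOperation.exists_pairwise hs _ T₀ rfl hT₀ hT₀x
  have hinv : ∀ J ∈ T, s.StarInvertible J := by
    intro J hJ
    obtain ⟨U, rfl⟩ := Multiset.exists_cons_of_mem hJ
    rw [Multiset.prod_cons] at hTx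
    exact StarOperation.invertible_of hx0 hTx
  refine ⟨⟨T, fun J hJ => ⟨hT J hJ, hinv J hJ⟩, hTp,
    (s.star_eq_coe (StarOperation.prod_ne_bot hT)).mpr hTx, ?_⟩, ?_⟩
  · intro U hU hUp hUx
    rw [s.star_eq_coe (StarOperation.prod_ne_bot hU)] at hUx
    refine (Multiset.Nodup.ext (StarOperation.nodup_of hs hU hUp)
      (StarOperation.nodup_of hs hT hTp)).mpr fun J => ?_
    rw [StarOperation.mem_iff hs hU hUp hUx, StarOperation.mem_iff hs hT hTp hTx]
  · intro M _ hM hxM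
    have := StarOperation.exists_factor hs hT hTp hTx M hM hxM
    exact ⟨hinv _ this, hT _ this⟩
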